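/- Let λ > 0 and μ > 0. There exists a unique twice continuously differentiable function τ : [0,∞) → ℝ with τ(t) > 0 for all t ≥ 0 such that τ''(t) = 2λ/τ(t) − μ·τ'(t) for all t ≥ 0, τ(0) = 1 and τ'(0) = 0; moreover this solution satisfies τ(t)/√t → 2√(λ/μ) and √t·τ'(t) → √(λ/μ) as t → +∞. -/

import Mathlib

open Filter Set

/-- The property of being a positive, twice continuously differentiable solution on `[0,∞)`
of the dispersion ODE `τ'' = 2λ/τ − μ τ'` with `τ(0) = 1`, `τ'(0) = 0`, where `τ'` and `τ''`
denote the first and second derivatives of `τ` on `[0,∞)`. -/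
def IsDispersionSolution (lam mu : ℝ) (τ τ' τ'' : ℝ → ℝ) : Prop :=
  (∀ t ∈ Ici (0:ℝ), 0 < τ t) ∧
  (∀ t ∈ Ici (0:ℝ), HasDerivWithinAt τ (τ' t) (Ici 0) t) ∧
  (∀ t ∈ Ici (0:ℝ), HasDerivWithinAt τ' (τ'' t) (Ici 0) t) ∧
  ContinuousOn τ'' (Ici 0) ∧
  (∀ t ∈ Ici (0:ℝ), τ'' t = 2 * lam / τ t - mu * τ' t) ∧
  τ 0 = 1 ∧ τ' 0 = 0

/-!
In the region `τ ≥ 1`, `0 ≤ τ' ≤ c` with `c > 2λ/μ`, the first-order system is bounded and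
Lipschitz, and no solution issued from `(1, 0)` can leave that region: `τ'` is increasing where it
vanishes and decreasing where it equals `c`. Truncating the vector field outside the region
therefore gives global existence and uniqueness.

For the asymptotics, `(τ τ' + μ τ² / 2)' = τ'² + 2λ ≥ 2λ` forces `τ → ∞`. Solutions of
`y' = g - μ y` relax to `lim g / μ`; applied to `y = τ'` this gives `τ' → 0`, and applied to
`y = τ τ'`, for which `g = τ'² + 2λ`, it gives `τ τ' → 2λ/μ`. Since `(τ²)' = 2 τ τ'`, it follows
that `τ² ∼ (4λ/μ) t`.
-/

open Topology Asymptotics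
open scoped NNReal

section Asymptotics

variable {E : Type*} [NormedAddCommGroup E] [NormedSpace ℝ E]

theorem isLittleO_atTop_of_hasDerivAt {f f' : ℝ → E} {h h' : ℝ → ℝ}
    (hf : ∀ᶠ t in atTop, HasDerivAt f (f' t) t) (hh : ∀ᶠ t in atTop, HasDerivAt h (h' t) t)
    (hh' : ∀ᶠ t in atTop, 0 ≤ h' t) (htop : Tendsto h atTop atTop) (hlim : f' =o[atTop] h') :
    f =o[atTop] h := by
  refine IsLittleO.of_bound fun ε hε ↦ ?_
  have hbound : ∀ᶠ t in atTop, ‖f' t‖ ≤ ε / 2 * h' t := by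
    filter_upwards [hlim.bound (half_pos hε), hh'] with t ht hpos
    rwa [Real.norm_of_nonneg hpos] at ht
  obtain ⟨T, hT⟩ := eventually_atTop.1 (hf.and (hh.and hbound))
  have growth : ∀ t ≥ T, ‖f t‖ ≤ ‖f T‖ + ε / 2 * (h t - h T) := fun t ht ↦
    image_norm_le_of_norm_deriv_right_le_deriv_boundary'
      (fun s hs ↦ (hT s hs.1).1.continuousAt.continuousWithinAt)
      (fun s hs ↦ (hT s hs.1).1.hasDerivWithinAt) (by simp)
      (fun s hs ↦ (((hT s hs.1).2.1.sub_const _).const_mul _).const_add _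
        |>.continuousAt.continuousWithinAt)
      (fun s hs ↦ (((hT s hs.1).2.1.sub_const _).const_mul _).const_add _ |>.hasDerivWithinAt)
      (fun s hs ↦ (hT s hs.1).2.2) (right_mem_Icc.2 ht)
  have absorb : ∀ᶠ t in atTop, ‖f T‖ - ε / 2 * h T ≤ ε / 2 * h t :=
    (htop.const_mul_atTop (half_pos hε)).eventually_ge_atTop _
  filter_upwards [eventually_ge_atTop T, absorb] with t ht habs
  calc ‖f t‖ ≤ ‖f T‖ + ε / 2 * (h t - h T) := growth t ht
    _ ≤ ε * h t := by linarith
    _ ≤ ε * ‖h t‖ := by gcongr; exact Real.le_norm_self _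

theorem tendsto_inv_smul_of_hasDerivAt_sub_smul {y g : ℝ → E} {μ : ℝ} {l : E} (hμ : 0 < μ)
    (hy : ∀ᶠ t in atTop, HasDerivAt y (g t - μ • y t) t) (hg : Tendsto g atTop (𝓝 l)) :
    Tendsto y atTop (𝓝 (μ⁻¹ • l)) := by
  have hexp : ∀ t, HasDerivAt (fun t ↦ Real.exp (μ * t)) (Real.exp (μ * t) * μ) t := fun t ↦ by
    simpa using ((hasDerivAt_id t).const_mul μ).exp
  have hdiff : ∀ᶠ t in atTop, HasDerivAt (fun t ↦ Real.exp (μ * t) • (y t - μ⁻¹ • l))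
      (Real.exp (μ * t) • (g t - l)) t := by
    filter_upwards [hy] with t ht
    refine ((hexp t).smul (ht.sub_const _)).congr_deriv ?_
    match_scalars <;> field_simp
    ring
  have hsmall : (fun t ↦ Real.exp (μ * t) • (g t - l)) =o[atTop]
      fun t ↦ Real.exp (μ * t) * μ :=
    (isBigO_refl (fun t ↦ Real.exp (μ * t)) atTop).smul_isLittleO
      ((isLittleO_const_iff hμ.ne').2 (tendsto_sub_nhds_zero_iff.2 hg))
  have hlittle := isLittleO_atTop_of_hasDerivAt hdiff (.of_forall hexp)
    (.of_forall fun t ↦ by positivity)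
    (Real.tendsto_exp_atTop.comp (tendsto_id.const_mul_atTop hμ)) hsmall
  have hscaled := (isBigO_refl (fun t ↦ (Real.exp (μ * t))⁻¹) atTop).smul_isLittleO hlittle
  simp only [inv_smul_smul₀ (Real.exp_ne_zero _), smul_eq_mul,
    inv_mul_cancel₀ (Real.exp_ne_zero _)] at hscaled
  exact tendsto_sub_nhds_zero_iff.1 ((isLittleO_one_iff ℝ).1 hscaled)

theorem tendsto_inv_smul_of_tendsto_hasDerivAt {f f' : ℝ → E} {l : E}
    (hf : ∀ᶠ t in atTop, HasDerivAt f (f' t) t) (hf' : Tendsto f' atTop (𝓝 l)) :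
    Tendsto (fun t ↦ t⁻¹ • f t) atTop (𝓝 l) := by
  have hlittle : (fun t ↦ f t - t • l) =o[atTop] (id : ℝ → ℝ) := by
    refine isLittleO_atTop_of_hasDerivAt (f' := fun t ↦ f' t - l) ?_
      (.of_forall hasDerivAt_id) (.of_forall fun _ ↦ zero_le_one) tendsto_id
      ((isLittleO_one_iff ℝ).2 (tendsto_sub_nhds_zero_iff.2 hf'))
    filter_upwards [hf] with t ht
    simpa using! ht.sub ((hasDerivAt_id t).smul_const l)
  refine tendsto_sub_nhds_zero_iff.1 (hlittle.tendsto_inv_smul_nhds_zero.congr' ?_)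
  filter_upwards [eventually_ne_atTop 0] with t ht
  simp only [id, smul_sub, inv_smul_smul₀ ht]

end Asymptotics

section Barrier

variable {f f' : ℝ → ℝ} {a b t : ℝ}

theorem le_of_hasDerivWithinAt_neg_of_eq
    (hf : ∀ s ∈ Ici a, HasDerivWithinAt f (f' s) (Ici a) s) (ha : f a ≤ b)
    (hb : ∀ s ∈ Ici a, f s = b → f' s < 0) (ht : t ∈ Ici a) : f t ≤ b :=
  image_le_of_deriv_right_lt_deriv_boundary (B := fun _ ↦ b)
    (fun s hs ↦ (hf s hs.1).continuousWithinAt.mono Icc_subset_Ici_self)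
    (fun s hs ↦ (hf s hs.1).mono (Ici_subset_Ici.2 hs.1)) ha
    (fun s ↦ hasDerivAt_const s b) (fun s hs ↦ hb s hs.1) (right_mem_Icc.2 ht)

theorem ge_of_hasDerivWithinAt_pos_of_eq
    (hf : ∀ s ∈ Ici a, HasDerivWithinAt f (f' s) (Ici a) s) (ha : b ≤ f a)
    (hb : ∀ s ∈ Ici a, f s = b → 0 < f' s) (ht : t ∈ Ici a) : b ≤ f t :=
  neg_le_neg_iff.1 <| le_of_hasDerivWithinAt_neg_of_eq (f := -f) (fun s hs ↦ (hf s hs).neg)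
    (neg_le_neg ha) (fun s hs hs' ↦ neg_neg_of_pos (hb s hs (neg_inj.1 hs'))) ht

theorem le_of_hasDerivWithinAt_nonneg
    (hf : ∀ s ∈ Ici a, HasDerivWithinAt f (f' s) (Ici a) s) (hf' : ∀ s ∈ Ici a, 0 ≤ f' s)
    (ht : t ∈ Ici a) : f a ≤ f t :=
  monotoneOn_of_hasDerivWithinAt_nonneg (convex_Ici a)
    (fun s hs ↦ (hf s hs).continuousWithinAt)
    (fun s hs ↦ (hf s (interior_subset hs)).mono interior_subset)
    (fun s hs ↦ hf' s (interior_subset hs)) self_mem_Ici ht ht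

end Barrier

section GlobalExistence

variable {E : Type*} [NormedAddCommGroup E] [NormedSpace ℝ E] {F : E → E} {K L : ℝ≥0}

theorem exists_forall_mem_Ioo_hasDerivAt_of_lipschitzWith_of_norm_le [CompleteSpace E]
    (hF : LipschitzWith K F) (hL : ∀ x, ‖F x‖ ≤ L) (p : E) {r : ℝ} (hr : 0 < r) :
    ∃ α : ℝ → E, α 0 = p ∧ ∀ t ∈ Ioo (-r) r, HasDerivAt α (F (α t)) t := by
  have hpl : IsPicardLindelof (fun _ ↦ F) (⟨0, by simp [hr.le]⟩ : Icc (-r) r) p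
      (L * r.toNNReal) 0 L K :=
    .of_time_independent (fun x _ ↦ hL x) hF.lipschitzOnWith (by simp [hr.le])
  obtain ⟨α, hα0, hα⟩ := hpl.exists_eq_forall_mem_Icc_hasDerivWithinAt₀
  exact ⟨α, hα0, fun t ht ↦ (hα t (Ioo_subset_Icc_self ht)).hasDerivAt (Icc_mem_nhds ht.1 ht.2)⟩

theorem eqOn_Ioo_of_hasDerivAt_of_lipschitzWith (hF : LipschitzWith K F) {α : ℝ → ℝ → E} {p : E}
    (hα0 : ∀ r > 0, α r 0 = p)
    (hα : ∀ r > 0, ∀ t ∈ Ioo (-r) r, HasDerivAt (α r) (F (α r t)) t) {r s : ℝ} (hr : 0 < r)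
    (hrs : r ≤ s) : EqOn (α r) (α s) (Ioo (-r) r) :=
  ODE_solution_unique_of_mem_Ioo (v := fun _ ↦ F) (s := fun _ ↦ univ) (t₀ := 0)
    (fun _ _ ↦ hF.lipschitzOnWith) ⟨neg_lt_zero.2 hr, hr⟩
    (fun t ht ↦ ⟨hα r hr t ht, mem_univ _⟩)
    (fun t ht ↦ ⟨hα s (hr.trans_le hrs) t (Ioo_subset_Ioo (neg_le_neg hrs) hrs ht), mem_univ _⟩)
    ((hα0 r hr).trans (hα0 s (hr.trans_le hrs)).symm)

theorem exists_forall_hasDerivAt_of_lipschitzWith_of_norm_le [CompleteSpace E]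
    (hF : LipschitzWith K F) (hL : ∀ x, ‖F x‖ ≤ L) (p : E) :
    ∃ α : ℝ → E, α 0 = p ∧ ∀ t, HasDerivAt α (F (α t)) t := by
  choose! α hα0 hα using fun (r : ℝ) (hr : 0 < r) ↦
    exists_forall_mem_Ioo_hasDerivAt_of_lipschitzWith_of_norm_le hF hL p hr
  have hlt : ∀ t : ℝ, |t| < |t| + 1 := fun t ↦ lt_add_one _
  have hglue : ∀ r > 0, EqOn (fun t ↦ α (|t| + 1) t) (α r) (Ioo (-r) r) := by
    intro r hr t ht
    rcases le_total (|t| + 1) r with h | h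
    · exact eqOn_Ioo_of_hasDerivAt_of_lipschitzWith hF hα0 hα (by positivity) h
        (abs_lt.1 (hlt t))
    · exact (eqOn_Ioo_of_hasDerivAt_of_lipschitzWith hF hα0 hα hr h ht).symm
  refine ⟨fun t ↦ α (|t| + 1) t, hα0 _ (by positivity), fun t ↦ ?_⟩
  have ht : t ∈ Ioo (-(|t| + 1)) (|t| + 1) := abs_lt.1 (hlt t)
  exact (hα (|t| + 1) (by positivity) t ht).congr_of_eventuallyEq
    ((hglue _ (by positivity)).eventuallyEq_of_mem (Ioo_mem_nhds ht.1 ht.2))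

end GlobalExistence

theorem lipschitzWith_inv_max {a : ℝ≥0} (ha : 0 < a) :
    LipschitzWith (a⁻¹ * a⁻¹) fun x : ℝ ↦ (max (a : ℝ) x)⁻¹ := by
  refine LipschitzWith.of_dist_le_mul fun x y ↦ ?_
  have ha' : (0 : ℝ) < a := ha
  have hx : (a : ℝ) ≤ max (a : ℝ) x := le_max_left _ _
  have hy : (a : ℝ) ≤ max (a : ℝ) y := le_max_left _ _
  calc dist (max (a : ℝ) x)⁻¹ (max (a : ℝ) y)⁻¹
      = (max (a : ℝ) x)⁻¹ * (max (a : ℝ) y)⁻¹ * dist (max (a : ℝ) x) (max (a : ℝ) y) := by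
        rw [dist_inv_inv₀ (ha'.trans_le hx).ne' (ha'.trans_le hy).ne',
          Real.norm_of_nonneg (ha'.le.trans hx), Real.norm_of_nonneg (ha'.le.trans hy)]
        field_simp
    _ ≤ (a : ℝ)⁻¹ * (a : ℝ)⁻¹ * dist x y := by
        gcongr
        simpa using (LipschitzWith.id.const_max (a : ℝ)).dist_le_mul x y

/-- The vector field `(x, v) ↦ (v, 2λ/x - μ v)` of the dispersion equation written as a first-order
system, with `x` truncated to `[1, ∞)` and `v` to `[0, c]` so as to be Lipschitz and bounded. -/
noncomputable def truncatedField (lam mu c : ℝ) (p : ℝ × ℝ) : ℝ × ℝ :=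
  (max 0 (min c p.2), 2 * lam / max 1 p.1 - mu * max 0 (min c p.2))

theorem truncatedField_of_mem {lam mu c x v : ℝ} (hx : 1 ≤ x) (hv : v ∈ Icc 0 c) :
    truncatedField lam mu c (x, v) = (v, 2 * lam / x - mu * v) := by
  simp only [truncatedField, min_eq_right hv.2, max_eq_right hv.1, max_eq_right hx]

theorem exists_lipschitzWith_truncatedField (lam mu c : ℝ) :
    ∃ K, LipschitzWith K (truncatedField lam mu c) := by
  have hv : LipschitzWith 1 fun p : ℝ × ℝ ↦ max 0 (min c p.2) :=
    (LipschitzWith.prod_snd.const_min _).const_max _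
  have hx : LipschitzWith _ fun p : ℝ × ℝ ↦ (max 1 p.1)⁻¹ :=
    (lipschitzWith_inv_max zero_lt_one).comp LipschitzWith.prod_fst
  exact ⟨_, hv.prodMk
    (((lipschitzWith_smul (2 * lam)).comp hx).sub ((lipschitzWith_smul mu).comp hv))⟩

theorem exists_norm_truncatedField_le (lam mu c : ℝ) :
    ∃ L : ℝ≥0, ∀ p, ‖truncatedField lam mu c p‖ ≤ L := by
  refine ⟨max ‖c‖₊ (‖2 * lam‖₊ + ‖mu‖₊ * ‖c‖₊), fun p ↦ ?_⟩
  have hv : ‖max 0 (min c p.2)‖ ≤ ‖c‖ := by simp only [Real.norm_eq_abs]; grind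
  have hx : ‖2 * lam / max 1 p.1‖ ≤ ‖2 * lam‖ := by
    rw [norm_div]
    exact div_le_self (norm_nonneg _) ((le_max_left _ _).trans (Real.le_norm_self _))
  refine max_le_max hv ((norm_sub_le _ _).trans (add_le_add hx ?_))
  exact (norm_mul _ _).trans_le (mul_le_mul_of_nonneg_left hv (norm_nonneg _))

namespace IsDispersionSolution

variable {lam mu c t : ℝ} {τ τ' τ'' σ σ' σ'' : ℝ → ℝ}

theorem hasDerivWithinAt (h : IsDispersionSolution lam mu τ τ' τ'') (ht : t ∈ Ici 0) :
    HasDerivWithinAt τ (τ' t) (Ici 0) t :=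
  h.2.1 t ht

theorem hasDerivWithinAt_deriv (h : IsDispersionSolution lam mu τ τ' τ'') (ht : t ∈ Ici 0) :
    HasDerivWithinAt τ' (2 * lam / τ t - mu * τ' t) (Ici 0) t :=
  h.2.2.2.2.1 t ht ▸ h.2.2.1 t ht

theorem initial (h : IsDispersionSolution lam mu τ τ' τ'') : τ 0 = 1 ∧ τ' 0 = 0 :=
  h.2.2.2.2.2

theorem deriv_nonneg (h : IsDispersionSolution lam mu τ τ' τ'') (hlam : 0 < lam)
    (ht : t ∈ Ici 0) : 0 ≤ τ' t := by
  refine ge_of_hasDerivWithinAt_pos_of_eq (fun s hs ↦ h.hasDerivWithinAt_deriv hs)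
    h.initial.2.ge (fun s hs hs0 ↦ ?_) ht
  have hpos : 0 < τ s := h.1 s hs
  rw [hs0, mul_zero, sub_zero]
  positivity

theorem one_le (h : IsDispersionSolution lam mu τ τ' τ'') (hlam : 0 < lam) (ht : t ∈ Ici 0) :
    1 ≤ τ t :=
  h.initial.1.ge.trans <| le_of_hasDerivWithinAt_nonneg (fun _ hs ↦ h.hasDerivWithinAt hs)
    (fun _ hs ↦ h.deriv_nonneg hlam hs) ht

theorem deriv_le (h : IsDispersionSolution lam mu τ τ' τ'') (hlam : 0 < lam) (hc : 0 ≤ c)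
    (hcmu : 2 * lam < c * mu) (ht : t ∈ Ici 0) : τ' t ≤ c := by
  refine le_of_hasDerivWithinAt_neg_of_eq (fun s hs ↦ h.hasDerivWithinAt_deriv hs)
    (h.initial.2.trans_le hc) (fun s hs hsc ↦ ?_) ht
  have hdiv : 2 * lam / τ s ≤ 2 * lam := div_le_self (by positivity) (h.one_le hlam hs)
  rw [hsc]
  linarith

theorem hasDerivWithinAt_truncatedField (h : IsDispersionSolution lam mu τ τ' τ'')
    (hlam : 0 < lam) (hc : 0 ≤ c) (hcmu : 2 * lam < c * mu) (ht : t ∈ Ici 0) :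
    HasDerivWithinAt (fun s ↦ (τ s, τ' s)) (truncatedField lam mu c (τ t, τ' t)) (Ici 0) t := by
  rw [truncatedField_of_mem (h.one_le hlam ht)
    ⟨h.deriv_nonneg hlam ht, h.deriv_le hlam hc hcmu ht⟩]
  exact (h.hasDerivWithinAt ht).prodMk (h.hasDerivWithinAt_deriv ht)

theorem eqOn (hσ : IsDispersionSolution lam mu σ σ' σ'')
    (hτ : IsDispersionSolution lam mu τ τ' τ'') (hlam : 0 < lam) (hmu : 0 < mu) :
    EqOn σ τ (Ici 0) := by
  intro t ht
  obtain ⟨c, hc, hcmu⟩ := exists_pos_lt_mul hmu (2 * lam)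
  obtain ⟨K, hK⟩ := exists_lipschitzWith_truncatedField lam mu c
  have dσ := fun s ↦ hσ.hasDerivWithinAt_truncatedField (t := s) hlam hc.le hcmu
  have dτ := fun s ↦ hτ.hasDerivWithinAt_truncatedField (t := s) hlam hc.le hcmu
  have hpair : EqOn (fun s ↦ (σ s, σ' s)) (fun s ↦ (τ s, τ' s)) (Icc 0 t) :=
    ODE_solution_unique (v := fun _ ↦ truncatedField lam mu c) (fun _ ↦ hK)
      (fun s hs ↦ (dσ s hs.1).continuousWithinAt.mono Icc_subset_Ici_self)
      (fun s hs ↦ (dσ s hs.1).mono (Ici_subset_Ici.2 hs.1))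
      (fun s hs ↦ (dτ s hs.1).continuousWithinAt.mono Icc_subset_Ici_self)
      (fun s hs ↦ (dτ s hs.1).mono (Ici_subset_Ici.2 hs.1))
      (by simp only [hσ.initial, hτ.initial])
  exact congrArg Prod.fst (hpair (right_mem_Icc.2 ht))

end IsDispersionSolution

section Existence

variable {lam mu c : ℝ} {α : ℝ → ℝ × ℝ}

theorem isDispersionSolution_of_hasDerivWithinAt (hpos : ∀ t ∈ Ici 0, 0 < (α t).1)
    (hα0 : α 0 = (1, 0))
    (hα : ∀ t ∈ Ici 0,
      HasDerivWithinAt α ((α t).2, 2 * lam / (α t).1 - mu * (α t).2) (Ici 0) t) :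
    IsDispersionSolution lam mu (fun t ↦ (α t).1) (fun t ↦ (α t).2)
      fun t ↦ 2 * lam / (α t).1 - mu * (α t).2 := by
  have hcont : ContinuousOn α (Ici 0) := fun t ht ↦ (hα t ht).continuousWithinAt
  refine ⟨hpos, fun t ht ↦ (hα t ht).fst, fun t ht ↦ (hα t ht).snd, ?_, fun _ _ ↦ rfl,
    congrArg Prod.fst hα0, congrArg Prod.snd hα0⟩
  exact (continuousOn_const.div hcont.fst fun t ht ↦ (hpos t ht).ne').sub
    (continuousOn_const.mul hcont.snd)

theorem one_le_fst_of_hasDerivWithinAt_truncatedField (hα0 : α 0 = (1, 0))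
    (hα : ∀ t ∈ Ici 0, HasDerivWithinAt α (truncatedField lam mu c (α t)) (Ici 0) t)
    {t : ℝ} (ht : t ∈ Ici 0) : 1 ≤ (α t).1 := by
  simpa only [hα0] using
    le_of_hasDerivWithinAt_nonneg (fun s hs ↦ (hα s hs).fst) (fun _ _ ↦ le_max_left _ _) ht

theorem snd_mem_Icc_of_hasDerivWithinAt_truncatedField (hlam : 0 < lam) (hc : 0 ≤ c)
    (hcmu : 2 * lam < c * mu) (hα0 : α 0 = (1, 0))
    (hα : ∀ t ∈ Ici 0, HasDerivWithinAt α (truncatedField lam mu c (α t)) (Ici 0) t)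
    {t : ℝ} (ht : t ∈ Ici 0) : (α t).2 ∈ Icc 0 c := by
  have hv : (α 0).2 = 0 := congrArg Prod.snd hα0
  constructor
  · refine ge_of_hasDerivWithinAt_pos_of_eq (fun s hs ↦ (hα s hs).snd) hv.ge
      (fun s _ hs0 ↦ ?_) ht
    simp only [truncatedField, hs0, min_eq_right hc, max_self, mul_zero, sub_zero]
    positivity
  · refine le_of_hasDerivWithinAt_neg_of_eq (fun s hs ↦ (hα s hs).snd) (hv.trans_le hc)
      (fun s _ hsc ↦ ?_) ht
    have hdiv : 2 * lam / max 1 (α s).1 ≤ 2 * lam :=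
      div_le_self (by positivity) (le_max_left _ _)
    simp only [truncatedField, hsc, min_self, max_eq_right hc]
    linarith

theorem exists_isDispersionSolution (hlam : 0 < lam) (hmu : 0 < mu) :
    ∃ τ τ' τ'' : ℝ → ℝ, IsDispersionSolution lam mu τ τ' τ'' := by
  obtain ⟨c, hc, hcmu⟩ := exists_pos_lt_mul hmu (2 * lam)
  obtain ⟨K, hK⟩ := exists_lipschitzWith_truncatedField lam mu c
  obtain ⟨L, hL⟩ := exists_norm_truncatedField_le lam mu c
  obtain ⟨α, hα0, hα⟩ := exists_forall_hasDerivAt_of_lipschitzWith_of_norm_le hK hL (1, 0)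
  have hα' : ∀ t ∈ Ici 0, HasDerivWithinAt α (truncatedField lam mu c (α t)) (Ici 0) t :=
    fun t _ ↦ (hα t).hasDerivWithinAt
  have hx : ∀ t ∈ Ici 0, 1 ≤ (α t).1 :=
    fun _ ↦ one_le_fst_of_hasDerivWithinAt_truncatedField hα0 hα'
  refine ⟨_, _, _, isDispersionSolution_of_hasDerivWithinAt
    (fun t ht ↦ one_pos.trans_le (hx t ht)) hα0 fun t ht ↦ ?_⟩
  rw [← truncatedField_of_mem (hx t ht)
    (snd_mem_Icc_of_hasDerivWithinAt_truncatedField hlam hc.le hcmu hα0 hα' ht)]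
  exact hα' t ht

end Existence

namespace IsDispersionSolution

variable {lam mu t : ℝ} {τ τ' τ'' : ℝ → ℝ}

theorem eventually_hasDerivAt (h : IsDispersionSolution lam mu τ τ' τ'') :
    ∀ᶠ t in atTop, HasDerivAt τ (τ' t) t := by
  filter_upwards [eventually_gt_atTop 0] with t ht
  exact (h.hasDerivWithinAt ht.le).hasDerivAt (Ici_mem_nhds ht)

theorem eventually_hasDerivAt_deriv (h : IsDispersionSolution lam mu τ τ' τ'') :
    ∀ᶠ t in atTop, HasDerivAt τ' (2 * lam / τ t - mu * τ' t) t := by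
  filter_upwards [eventually_gt_atTop 0] with t ht
  exact (h.hasDerivWithinAt_deriv ht.le).hasDerivAt (Ici_mem_nhds ht)

theorem two_mul_lam_mul_le (h : IsDispersionSolution lam mu τ τ' τ'') (hmu : 0 ≤ mu)
    (ht : t ∈ Ici 0) : 2 * lam * t ≤ τ t * τ' t + mu / 2 * τ t ^ 2 := by
  have hderiv : ∀ s ∈ Ici 0, HasDerivWithinAt
      (fun s ↦ τ s * τ' s + mu / 2 * τ s ^ 2 - 2 * lam * s) (τ' s ^ 2) (Ici 0) s := by
    intro s hs
    have hτ := h.hasDerivWithinAt hs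
    have hne : τ s ≠ 0 := (h.1 s hs).ne'
    refine (((hτ.mul (h.hasDerivWithinAt_deriv hs)).add ((hτ.pow 2).const_mul (mu / 2))).sub
      ((hasDerivWithinAt_id s _).const_mul (2 * lam))).congr_deriv ?_
    field_simp
    ring
  have hmono := le_of_hasDerivWithinAt_nonneg hderiv (fun s _ ↦ sq_nonneg (τ' s)) ht
  simp only [h.initial] at hmono
  linarith

theorem tendsto_atTop (h : IsDispersionSolution lam mu τ τ' τ'') (hlam : 0 < lam)
    (hmu : 0 < mu) : Tendsto τ atTop atTop := by
  obtain ⟨c, hc, hcmu⟩ := exists_pos_lt_mul hmu (2 * lam)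
  have hsq : ∀ t ∈ Ici 0, 2 * lam * t ≤ (c + mu / 2) * τ t ^ 2 := by
    intro t ht
    have h1 := h.one_le hlam ht
    calc 2 * lam * t ≤ τ t * τ' t + mu / 2 * τ t ^ 2 := h.two_mul_lam_mul_le hmu.le ht
      _ ≤ τ t ^ 2 * c + mu / 2 * τ t ^ 2 := by
        gcongr
        · exact h.deriv_nonneg hlam ht
        · exact le_self_pow₀ h1 two_ne_zero
        · exact h.deriv_le hlam hc.le hcmu ht
      _ = (c + mu / 2) * τ t ^ 2 := by ring
  have hsqrt : Tendsto (fun t ↦ √(2 * lam / (c + mu / 2) * t)) atTop atTop :=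
    Real.tendsto_sqrt_atTop.comp (tendsto_id.const_mul_atTop (by positivity))
  refine tendsto_atTop_mono' _ ?_ hsqrt
  filter_upwards [eventually_ge_atTop 0] with t ht
  refine (Real.sqrt_le_left (h.1 t ht).le).2 ?_
  rw [div_mul_eq_mul_div, div_le_iff₀' (by positivity)]
  exact hsq t ht

theorem tendsto_deriv_zero (h : IsDispersionSolution lam mu τ τ' τ'') (hlam : 0 < lam)
    (hmu : 0 < mu) : Tendsto τ' atTop (𝓝 0) := by
  simpa using tendsto_inv_smul_of_hasDerivAt_sub_smul hmu h.eventually_hasDerivAt_deriv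
    ((h.tendsto_atTop hlam hmu).const_div_atTop (2 * lam))

theorem tendsto_mul_deriv (h : IsDispersionSolution lam mu τ τ' τ'') (hlam : 0 < lam)
    (hmu : 0 < mu) : Tendsto (fun t ↦ τ t * τ' t) atTop (𝓝 (2 * (lam / mu))) := by
  have hderiv : ∀ᶠ t in atTop, HasDerivAt (fun t ↦ τ t * τ' t)
      (τ' t ^ 2 + 2 * lam - mu • (τ t * τ' t)) t := by
    filter_upwards [eventually_ge_atTop 0, h.eventually_hasDerivAt,
      h.eventually_hasDerivAt_deriv] with t ht hτ hτ'
    have hne : τ t ≠ 0 := (h.1 t ht).ne'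
    refine (hτ.mul hτ').congr_deriv ?_
    rw [smul_eq_mul]
    field_simp
    ring
  convert tendsto_inv_smul_of_hasDerivAt_sub_smul hmu hderiv
    (((h.tendsto_deriv_zero hlam hmu).pow 2).add_const (2 * lam)) using 2
  rw [smul_eq_mul]
  ring

theorem tendsto_sq_div (h : IsDispersionSolution lam mu τ τ' τ'') (hlam : 0 < lam)
    (hmu : 0 < mu) : Tendsto (fun t ↦ τ t ^ 2 / t) atTop (𝓝 (2 ^ 2 * (lam / mu))) := by
  have hderiv : ∀ᶠ t in atTop, HasDerivAt (fun t ↦ τ t ^ 2) (2 * (τ t * τ' t)) t := by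
    filter_upwards [h.eventually_hasDerivAt] with t ht
    exact (ht.pow 2).congr_deriv (by simp [mul_assoc])
  convert tendsto_inv_smul_of_tendsto_hasDerivAt hderiv
    ((h.tendsto_mul_deriv hlam hmu).const_mul 2) using 2
  · rw [smul_eq_mul, div_eq_inv_mul]
  · ring

theorem tendsto_div_sqrt (h : IsDispersionSolution lam mu τ τ' τ'') (hlam : 0 < lam)
    (hmu : 0 < mu) : Tendsto (fun t ↦ τ t / √t) atTop (𝓝 (2 * √(lam / mu))) := by
  have hsqrt := (h.tendsto_sq_div hlam hmu).sqrt
  rw [Real.sqrt_mul (sq_nonneg 2), Real.sqrt_sq zero_le_two] at hsqrt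
  refine hsqrt.congr' ?_
  filter_upwards [eventually_ge_atTop 0] with t ht
  rw [Real.sqrt_div (sq_nonneg _), Real.sqrt_sq (h.1 t ht).le]

theorem tendsto_sqrt_mul_deriv (h : IsDispersionSolution lam mu τ τ' τ'') (hlam : 0 < lam)
    (hmu : 0 < mu) : Tendsto (fun t ↦ √t * τ' t) atTop (𝓝 √(lam / mu)) := by
  have hpos : 0 < √(lam / mu) := Real.sqrt_pos.2 (div_pos hlam hmu)
  have hquot := (h.tendsto_mul_deriv hlam hmu).div (h.tendsto_div_sqrt hlam hmu)
    (mul_pos two_pos hpos).ne'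
  rw [mul_div_mul_left _ _ two_ne_zero, Real.div_sqrt] at hquot
  refine hquot.congr' ?_
  filter_upwards [eventually_ge_atTop 0] with t ht
  have hne : τ t ≠ 0 := (h.1 t ht).ne'
  simp only [Pi.div_apply]
  field_simp

end IsDispersionSolution

/-- **Existence, uniqueness and asymptotics of the dispersion rate.**
For `λ > 0`, `μ > 0`, there is a unique positive, twice continuously differentiable
solution `τ` on `[0,∞)` of `τ'' = 2λ/τ − μ τ'`, `τ(0) = 1`, `τ'(0) = 0`; moreover
`τ(t)/√t → 2√(λ/μ)` and `√t · τ'(t) → √(λ/μ)` as `t → +∞`. -/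
theorem dispersion_rate_exists_unique_asymptotics
    (lam mu : ℝ) (hlam : 0 < lam) (hmu : 0 < mu) :
    ∃ τ τ' τ'' : ℝ → ℝ,
      IsDispersionSolution lam mu τ τ' τ'' ∧
      (∀ σ σ' σ'' : ℝ → ℝ, IsDispersionSolution lam mu σ σ' σ'' →
        Set.EqOn σ τ (Ici 0)) ∧
      Tendsto (fun t => τ t / Real.sqrt t) atTop (nhds (2 * Real.sqrt (lam / mu))) ∧
      Tendsto (fun t => Real.sqrt t * τ' t) atTop (nhds (Real.sqrt (lam / mu))) := by
  obtain ⟨τ, τ', τ'', hτ⟩ := exists_isDispersionSolution hlam hmu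
  exact ⟨τ, τ', τ'', hτ, fun σ σ' σ'' hσ ↦ hσ.eqOn hτ hlam hmu, hτ.tendsto_div_sqrt hlam hmu,
    hτ.tendsto_sqrt_mul_deriv hlam hmu⟩
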